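/- Let 0 < λ₁ < λ₂ < λ₃ and write R̃(y) = √((y² − λ₁²)(λ₂² − y²)(λ₃² − y²)). Then ∫_{λ₁}^{λ₂} y⁵/R̃(y) dy = (2(λ₁² + λ₂² + λ₃²)/3)·∫_{λ₁}^{λ₂} y³/R̃(y) dy − ((λ₁²λ₂² + λ₁²λ₃² + λ₂²λ₃²)/3)·∫_{λ₁}^{λ₂} y/R̃(y) dy. -/

import Mathlib

/-!
On `(l1, l2)` the derivative of `R̃` is `(3 y⁵ - 2 e₁ y³ + e₂ y) / R̃`, where `e₁, e₂` are the
elementary symmetric functions of `l1², l2², l3²`; since `R̃` vanishes at both endpoints, the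
integral of this derivative is `0`, which is the claim once the integral is split.

Splitting requires each moment to be integrable despite the inverse square-root singularities at the
endpoints. The singular factor `y / √((y² - l1²)(l2² - y²))` is the nonnegative derivative of
`arcsin ((2 y² - l1² - l2²) / (l2² - l1²)) / 2`, hence integrable, and the remaining factor
`yᵏ / √(l3² - y²)` is continuous on `[l1, l2]`.
-/

open MeasureTheory in
theorem intervalIntegrable_sgap_kernel (l1 l2 : ℝ) (h1 : 0 < l1) (h12 : l1 < l2) :
    IntervalIntegrable (fun y : ℝ => y / Real.sqrt ((y ^ 2 - l1 ^ 2) * (l2 ^ 2 - y ^ 2)))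
      volume l1 l2 := by
  have hd : 0 < l2 ^ 2 - l1 ^ 2 := by nlinarith
  apply intervalIntegral.intervalIntegrable_deriv_of_nonneg
    (g := fun y => Real.arcsin ((2 * y ^ 2 - l1 ^ 2 - l2 ^ 2) / (l2 ^ 2 - l1 ^ 2)) / 2)
  · exact ((Real.continuous_arcsin.comp (by fun_prop)).div_const 2).continuousOn
  · intro y hy
    rw [min_eq_left h12.le, max_eq_right h12.le] at hy
    obtain ⟨ha, hb⟩ := hy
    have hp : 0 < y ^ 2 - l1 ^ 2 := by nlinarith
    have hq : 0 < l2 ^ 2 - y ^ 2 := by nlinarith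
    have hu : HasDerivAt (fun y : ℝ => (2 * y ^ 2 - l1 ^ 2 - l2 ^ 2) / (l2 ^ 2 - l1 ^ 2))
        (4 * y / (l2 ^ 2 - l1 ^ 2)) y := by
      have h := (((((hasDerivAt_id y).pow 2).const_mul 2).sub_const (l1 ^ 2)).sub_const
        (l2 ^ 2)).div_const (l2 ^ 2 - l1 ^ 2)
      refine h.congr_deriv ?_
      simp
      ring
    have hlo : -1 < (2 * y ^ 2 - l1 ^ 2 - l2 ^ 2) / (l2 ^ 2 - l1 ^ 2) := by
      rw [lt_div_iff₀ hd]; linarith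
    have hhi : (2 * y ^ 2 - l1 ^ 2 - l2 ^ 2) / (l2 ^ 2 - l1 ^ 2) < 1 := by
      rw [div_lt_iff₀ hd]; linarith
    have hs : Real.sqrt (1 - ((2 * y ^ 2 - l1 ^ 2 - l2 ^ 2) / (l2 ^ 2 - l1 ^ 2)) ^ 2)
        = 2 / (l2 ^ 2 - l1 ^ 2) * Real.sqrt ((y ^ 2 - l1 ^ 2) * (l2 ^ 2 - y ^ 2)) := by
      have he : 1 - ((2 * y ^ 2 - l1 ^ 2 - l2 ^ 2) / (l2 ^ 2 - l1 ^ 2)) ^ 2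
          = (2 / (l2 ^ 2 - l1 ^ 2)) ^ 2 * ((y ^ 2 - l1 ^ 2) * (l2 ^ 2 - y ^ 2)) := by
        field_simp
        ring
      rw [he, Real.sqrt_mul (sq_nonneg _), Real.sqrt_sq (by positivity)]
    have h := ((Real.hasDerivAt_arcsin hlo.ne' hhi.ne).comp y hu).div_const 2
    refine h.congr_deriv ?_
    rw [hs]
    have hS : 0 < Real.sqrt ((y ^ 2 - l1 ^ 2) * (l2 ^ 2 - y ^ 2)) :=
      Real.sqrt_pos.2 (mul_pos hp hq)
    field_simp
    ring
  · intro y hy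
    rw [min_eq_left h12.le] at hy
    have : 0 < y := h1.trans hy.1
    positivity

open MeasureTheory in
theorem intervalIntegrable_sgap_moment (l1 l2 l3 : ℝ)
    (h1 : 0 < l1) (h12 : l1 < l2) (h23 : l2 < l3) (k : ℕ) :
    IntervalIntegrable (fun y : ℝ => y ^ (k + 1) /
      Real.sqrt ((y ^ 2 - l1 ^ 2) * (l2 ^ 2 - y ^ 2) * (l3 ^ 2 - y ^ 2))) volume l1 l2 := by
  have hr : ∀ y ∈ Set.uIcc l1 l2, 0 < l3 ^ 2 - y ^ 2 := by
    intro y hy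
    rw [Set.uIcc_of_le h12.le] at hy
    nlinarith [hy.1, hy.2]
  have hc : ContinuousOn (fun y : ℝ => y ^ k / Real.sqrt (l3 ^ 2 - y ^ 2)) (Set.uIcc l1 l2) :=
    ContinuousOn.div (by fun_prop) (by fun_prop) fun y hy => (Real.sqrt_pos.2 (hr y hy)).ne'
  refine ((intervalIntegrable_sgap_kernel l1 l2 h1 h12).mul_continuousOn hc).congr fun y hy => ?_
  have hy' := hr y (Set.uIoc_subset_uIcc hy)
  rw [Real.sqrt_mul' _ hy'.le, div_mul_div_comm, pow_succ' y k]

/-- Reduction identity for moment integrals over the s-gap `(λ₁, λ₂)` of the genus-1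
KdV soliton condensate, with `R̃(y) = √((y²-λ₁²)(λ₂²-y²)(λ₃²-y²))`:
`∫ y⁵/R̃ = (2(λ₁²+λ₂²+λ₃²)/3)·∫ y³/R̃ - ((λ₁²λ₂²+λ₁²λ₃²+λ₂²λ₃²)/3)·∫ y/R̃`. -/
theorem sgap_fifth_moment_reduction (l1 l2 l3 : ℝ)
    (h1 : 0 < l1) (h12 : l1 < l2) (h23 : l2 < l3) :
    ∫ y in l1..l2,
        y ^ 5 / Real.sqrt ((y ^ 2 - l1 ^ 2) * (l2 ^ 2 - y ^ 2) * (l3 ^ 2 - y ^ 2)) =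
      (2 * (l1 ^ 2 + l2 ^ 2 + l3 ^ 2) / 3) *
        (∫ y in l1..l2,
          y ^ 3 / Real.sqrt ((y ^ 2 - l1 ^ 2) * (l2 ^ 2 - y ^ 2) * (l3 ^ 2 - y ^ 2))) -
      ((l1 ^ 2 * l2 ^ 2 + l1 ^ 2 * l3 ^ 2 + l2 ^ 2 * l3 ^ 2) / 3) *
        (∫ y in l1..l2,
          y / Real.sqrt ((y ^ 2 - l1 ^ 2) * (l2 ^ 2 - y ^ 2) * (l3 ^ 2 - y ^ 2))) := by
  have hI5 := intervalIntegrable_sgap_moment l1 l2 l3 h1 h12 h23 4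
  have hI3 := intervalIntegrable_sgap_moment l1 l2 l3 h1 h12 h23 2
  have hI1 := intervalIntegrable_sgap_moment l1 l2 l3 h1 h12 h23 0
  simp only [Nat.reduceAdd, zero_add, pow_one] at hI5 hI3 hI1
  have hint := ((hI5.const_mul 3).sub
    (hI3.const_mul (2 * (l1 ^ 2 + l2 ^ 2 + l3 ^ 2)))).add
    (hI1.const_mul (l1 ^ 2 * l2 ^ 2 + l1 ^ 2 * l3 ^ 2 + l2 ^ 2 * l3 ^ 2))
  have key := intervalIntegral.integral_eq_sub_of_hasDerivAt_of_le h12.le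
    (f := fun y => Real.sqrt ((y ^ 2 - l1 ^ 2) * (l2 ^ 2 - y ^ 2) * (l3 ^ 2 - y ^ 2)))
    (by fun_prop) (fun y hy => by
      obtain ⟨ha, hb⟩ := hy
      have hp : 0 < y ^ 2 - l1 ^ 2 := by nlinarith
      have hq : 0 < l2 ^ 2 - y ^ 2 := by nlinarith
      have hr : 0 < l3 ^ 2 - y ^ 2 := by nlinarith
      have hP := mul_pos (mul_pos hp hq) hr
      have hsq : HasDerivAt (fun y : ℝ => y ^ 2) (2 * y) y := by
        simpa using hasDerivAt_pow 2 y
      have h := (((hsq.sub_const (l1 ^ 2)).mul (hsq.const_sub (l2 ^ 2))).mul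
        (hsq.const_sub (l3 ^ 2))).sqrt hP.ne'
      refine h.congr_deriv ?_
      have hS := Real.sqrt_pos.2 hP
      simp only [Pi.mul_apply]
      field_simp
      ring) hint
  rw [intervalIntegral.integral_add ((hI5.const_mul 3).sub (hI3.const_mul _)) (hI1.const_mul _),
    intervalIntegral.integral_sub (hI5.const_mul 3) (hI3.const_mul _)] at key
  simp only [intervalIntegral.integral_const_mul, sub_self, zero_mul, mul_zero,
    Real.sqrt_zero] at key
  linarith
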